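/- Let (Q, n) be a regular local ring of embedding dimension 2, let J ⊆ n² be a nonzero ideal, and let i ≥ 3 be an integer such that n^i is not contained in J and J is not contained in n^i. Let t be the largest integer with J ⊆ n^t. If the ideal J + n^i can be generated by two elements, then there exists f ∈ J with f ∉ n^{t+1} such that J + n^i = (f) + n^i. -/

import Mathlib

/-!
Write `n` for the maximal ideal and `I = J + n^i`. Nakayama's lemma shows that the image of `J` in
`I / nI`, a vector space of dimension at most two, is a line: it is nonzero because `J` is not
contained in `n^i`, and it is not all of a plane because otherwise `I = J ⊇ n^i`. Any `f ∈ J`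
spanning this line satisfies `J ≤ (f) + nI`, hence `I ≤ (f) + n^i + nI` and, by Nakayama again,
`I = (f) + n^i`. Since `t < i`, having `f ∈ n^(t+1)` would force `J ≤ n^(t+1)`, so `f ∉ n^(t+1)`.
The dimension count is carried out by exchanging generators (`exists_span_pair_eq`).
-/

open IsLocalRing

/-- An element of a two-generated ideal lying outside `n` times the ideal can be completed to a pair
of generators. -/
lemma exists_span_pair_eq {Q : Type*} [CommRing Q] [IsLocalRing Q] {I : Ideal Q} {a b f : Q}
    (hI : Ideal.span {a, b} = I) (hf : f ∈ I) (hfn : f ∉ maximalIdeal Q * I) :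
    ∃ c : Q, Ideal.span {f, c} = I := by
  have ha : a ∈ I := hI ▸ Ideal.subset_span (by simp)
  have hb : b ∈ I := hI ▸ Ideal.subset_span (by simp)
  obtain ⟨r, s, hrs⟩ := Ideal.mem_span_pair.1 (hI.symm ▸ hf)
  have hunit : IsUnit r ∨ IsUnit s := by
    by_contra! h
    exact hfn (hrs ▸ add_mem
      (Ideal.mul_mem_mul ((mem_maximalIdeal r).2 h.1) ha)
      (Ideal.mul_mem_mul ((mem_maximalIdeal s).2 h.2) hb))
  rcases hunit with ⟨u, rfl⟩ | ⟨u, rfl⟩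
  · refine ⟨b, le_antisymm (Ideal.span_le.2 (by simp [Set.pair_subset_iff, hf, hb])) ?_⟩
    rw [← hI, Ideal.span_le, Set.pair_subset_iff]
    refine ⟨Ideal.mem_span_pair.2 ⟨↑u⁻¹, -(↑u⁻¹ * s), ?_⟩, Ideal.subset_span (by simp)⟩
    linear_combination (-(↑u⁻¹ : Q)) * hrs + a * u.inv_mul
  · refine ⟨a, le_antisymm (Ideal.span_le.2 (by simp [Set.pair_subset_iff, hf, ha])) ?_⟩
    rw [← hI, Ideal.span_le, Set.pair_subset_iff]
    refine ⟨Ideal.subset_span (by simp), Ideal.mem_span_pair.2 ⟨↑u⁻¹, -(↑u⁻¹ * r), ?_⟩⟩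
    linear_combination (-(↑u⁻¹ : Q)) * hrs + b * u.inv_mul

/-- Nakayama's lemma for ideals of a Noetherian local ring. -/
lemma le_of_le_sup_maximalIdeal_mul {Q : Type*} [CommRing Q] [IsLocalRing Q] [IsNoetherianRing Q]
    {I K : Ideal Q} (h : I ≤ K ⊔ maximalIdeal Q * I) : I ≤ K :=
  Submodule.le_of_le_smul_of_le_jacobson_bot (IsNoetherian.noetherian I)
    (jacobson_eq_maximalIdeal ⊥ bot_ne_top).ge h

/-- Let `(Q, n)` be a regular local ring of embedding dimension `2` (a commutative
Noetherian local ring of Krull dimension `2` whose maximal ideal `n` is generated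
by two elements, which is equivalent to being regular of embedding dimension `2`).
Let `J ⊆ n²` be a nonzero ideal, let `i ≥ 3` be such that `n^i ⊄ J` and `J ⊄ n^i`,
and let `t` be the largest integer with `J ⊆ n^t` (the valuation of `J`).
If `J + n^i` can be generated by two elements, then there exists `f ∈ J` with
`f ∉ n^(t+1)` such that `J + n^i = (f) + n^i`. -/
theorem stmt2 (Q : Type*) [CommRing Q] [IsLocalRing Q] [IsNoetherianRing Q]
    (hdim : ringKrullDim Q = 2)
    (hreg : ∃ x y : Q, Ideal.span {x, y} = maximalIdeal Q)
    (J : Ideal Q) (hJ0 : J ≠ ⊥) (hJ : J ≤ (maximalIdeal Q) ^ 2)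
    (i : ℕ) (hi : 3 ≤ i)
    (hni : ¬ (maximalIdeal Q) ^ i ≤ J) (hJn : ¬ J ≤ (maximalIdeal Q) ^ i)
    (t : ℕ) (htle : J ≤ (maximalIdeal Q) ^ t) (htmax : ¬ J ≤ (maximalIdeal Q) ^ (t + 1))
    (h2gen : ∃ a b : Q, Ideal.span {a, b} = J + (maximalIdeal Q) ^ i) :
    ∃ f ∈ J, f ∉ (maximalIdeal Q) ^ (t + 1) ∧
      J + (maximalIdeal Q) ^ i = Ideal.span {f} + (maximalIdeal Q) ^ i := by
  obtain ⟨a, b, hab⟩ := h2gen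
  rw [Submodule.add_eq_sup] at hab
  simp only [Submodule.add_eq_sup]
  set I := J ⊔ maximalIdeal Q ^ i with hI
  have hJI : J ≤ I := le_sup_left
  have hnI : maximalIdeal Q ^ i ≤ I := le_sup_right
  have hti : t + 1 ≤ i := by
    by_contra! h
    exact hJn (htle.trans (Ideal.pow_le_pow_right (by omega)))
  have hJnI : ¬ J ≤ maximalIdeal Q * I := fun h =>
    hJn (hJI.trans (le_of_le_sup_maximalIdeal_mul (sup_le (h.trans le_sup_right) le_sup_left)))
  obtain ⟨f, hfJ, hfn⟩ := SetLike.not_le_iff_exists.1 hJnI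
  obtain ⟨c, hc⟩ := exists_span_pair_eq hab (hJI hfJ) hfn
  have hcI : c ∈ I := hc ▸ Ideal.subset_span (by simp)
  -- The image of `J` in `I / nI` is spanned by `f`; otherwise `c ∈ J`, and `J` would contain `I`.
  have hJf : J ≤ Ideal.span {f} ⊔ maximalIdeal Q * I := by
    intro g hg
    obtain ⟨r, s, hrs⟩ := Ideal.mem_span_pair.1 (hc.symm ▸ hJI hg)
    by_cases hs : IsUnit s
    · have hcJ : c ∈ J := by
        rw [← Ideal.unit_mul_mem_iff_mem J hs, ← add_sub_cancel_left (r * f) (s * c), hrs]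
        exact sub_mem hg (J.mul_mem_left r hfJ)
      refine absurd (hnI.trans ?_) hni
      rw [← hc, Ideal.span_le, Set.pair_subset_iff]
      exact ⟨hfJ, hcJ⟩
    · rw [← hrs]
      exact Submodule.add_mem_sup (Ideal.mem_span_singleton'.2 ⟨r, rfl⟩)
        (Ideal.mul_mem_mul ((mem_maximalIdeal s).2 hs) hcI)
  have hIf : I = Ideal.span {f} ⊔ maximalIdeal Q ^ i := by
    refine le_antisymm (le_of_le_sup_maximalIdeal_mul (sup_le ?_ ?_))
      (sup_le ((Ideal.span_singleton_le_iff_mem I).2 (hJI hfJ)) hnI)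
    · exact hJf.trans (sup_le_sup_right le_sup_left _)
    · exact le_sup_right.trans le_sup_left
  refine ⟨f, hfJ, fun hft => htmax ?_, hIf⟩
  exact (hJI.trans hIf.le).trans (sup_le ((Ideal.span_singleton_le_iff_mem _).2 hft)
    (Ideal.pow_le_pow_right hti))
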